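/- arXiv:2512.05761 — 2 statements merged into one kernel-verified Lean document; each statement's English description precedes it below -/
import Mathlib

section
/- Maassen–Uffink entropic uncertainty relation for pure states. Let d ≥ 1, let ψ be a unit vector in EuclideanSpace ℂ (Fin d), and let u, v be two orthonormal bases of EuclideanSpace ℂ (Fin d). Define the outcome distributions q(k) = ‖⟪u k, ψ⟫‖² and r(ℓ) = ‖⟪v ℓ, ψ⟫‖², and let c = max over k, ℓ of ‖⟪u k, v ℓ⟫‖. Then H(q) + H(r) ≥ −2·log₂ c, where H is the base-2 Shannon entropy. -/
open Finset in
/-- Base-2 Shannon entropy of a finitely supported probability vector,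
with the convention `0 · log₂ 0 = 0`. -/
noncomputable def shannonEntropy2 {n : ℕ} (q : Fin n → ℝ) : ℝ :=
  ∑ k, Real.negMulLog (q k) / Real.log 2

theorem mu_norm_sum {d : ℕ} (u : OrthonormalBasis (Fin d) ℂ (EuclideanSpace ℂ (Fin d)))
    (x : Fin d → ℂ) : ‖∑ k, x k • u k‖ ^ 2 = ∑ k, ‖x k‖ ^ 2 := by
  rw [← u.sum_sq_norm_inner_right]
  refine Finset.sum_congr rfl fun k _ => ?_
  rw [u.orthonormal.inner_right_fintype]

theorem mu_bilin {d : ℕ} (u v : OrthonormalBasis (Fin d) ℂ (EuclideanSpace ℂ (Fin d)))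
    (x y : Fin d → ℂ) (hx : ∑ k, ‖x k‖ ^ 2 = 1) (hy : ∑ k, ‖y k‖ ^ 2 = 1) :
    ‖∑ k, ∑ l, x k * inner ℂ (u k) (v l) * y l‖ ≤ 1 := by
  have h : ∑ k, ∑ l, x k * inner ℂ (u k) (v l) * y l
      = inner ℂ (∑ k, (starRingEnd ℂ (x k)) • u k) (∑ l, y l • v l) := by
    rw [sum_inner]
    refine Finset.sum_congr rfl fun k _ => ?_
    rw [inner_sum]
    refine Finset.sum_congr rfl fun l _ => ?_
    rw [inner_smul_left, inner_smul_right]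
    simp
    ring
  rw [h]
  refine (norm_inner_le_norm _ _).trans ?_
  have h1 := mu_norm_sum u (fun k => starRingEnd ℂ (x k))
  have h2 := mu_norm_sum v y
  simp only [RCLike.norm_conj] at h1
  rw [hx] at h1
  rw [hy] at h2
  rw [(pow_eq_one_iff_of_nonneg (norm_nonneg _) two_ne_zero).1 h1,
    (pow_eq_one_iff_of_nonneg (norm_nonneg _) two_ne_zero).1 h2]
  norm_num

theorem mu_exp_one (t : ℝ) (ht : 0 ≤ t) : t * Real.exp (Real.log t) = t ^ 2 := by
  rcases ht.eq_or_lt with h | h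
  · simp [← h]
  · rw [Real.exp_log h, sq]

theorem mu_main {d : ℕ} (u v : OrthonormalBasis (Fin d) ℂ (EuclideanSpace ℂ (Fin d)))
    (ψ : EuclideanSpace ℂ (Fin d)) (hψ : ‖ψ‖ = 1) (c : ℝ) (hc0 : 0 < c)
    (hc : ∀ k l, ‖inner ℂ (u k) (v l)‖ ≤ c) :
    ∑ k, ‖inner ℂ (u k) ψ‖ ^ 2 * Real.log ‖inner ℂ (u k) ψ‖ +
    ∑ l, ‖inner ℂ (v l) ψ‖ ^ 2 * Real.log ‖inner ℂ (v l) ψ‖ ≤ Real.log c := by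
  set A : Fin d → ℝ := fun k => Real.log ‖inner ℂ (u k) ψ‖ with hA
  set B : Fin d → ℝ := fun l => Real.log ‖inner ℂ (v l) ψ‖ with hB
  have hnA : ∀ k, ‖inner ℂ ψ (u k)‖ = ‖inner ℂ (u k) ψ‖ := fun k => norm_inner_symm _ _
  have sA : ∑ k, ‖inner ℂ (u k) ψ‖ ^ 2 = 1 := by rw [u.sum_sq_norm_inner_right, hψ]; norm_num
  have sB : ∑ k, ‖inner ℂ (v k) ψ‖ ^ 2 = 1 := by rw [v.sum_sq_norm_inner_right, hψ]; norm_num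
  set F : ℂ → ℂ := fun z => ∑ k, ∑ l, (inner ℂ ψ (u k) * Complex.exp (z * A k)) *
    inner ℂ (u k) (v l) * (inner ℂ (v l) ψ * Complex.exp (z * B l)) with hF
  have nexp : ∀ (z : ℂ) (a : ℝ), ‖Complex.exp (z * a)‖ = Real.exp (z.re * a) := by
    intro z a
    rw [Complex.norm_exp]; simp
  have hd : Differentiable ℂ F := by
    rw [hF]; fun_prop
  have h0 : ∀ z ∈ Complex.re ⁻¹' {0}, ‖F z‖ ≤ 1 := by
    intro z hz
    have hz : z.re = 0 := hz
    apply mu_bilin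
    · simpa [nexp, hz, hnA] using sA
    · simpa [nexp, hz] using sB
  have h1 : ∀ z ∈ Complex.re ⁻¹' {1}, ‖F z‖ ≤ c := by
    intro z hz
    have hz : z.re = 1 := hz
    calc ‖F z‖ ≤ ∑ k, ∑ l, ‖inner ℂ (u k) ψ‖ ^ 2 * c * ‖inner ℂ (v l) ψ‖ ^ 2 := by
          refine (norm_sum_le _ _).trans (Finset.sum_le_sum fun k _ => ?_)
          refine (norm_sum_le _ _).trans (Finset.sum_le_sum fun l _ => ?_)
          simp only [norm_mul, nexp, hz, hnA, one_mul]
          rw [mu_exp_one _ (norm_nonneg _), mu_exp_one _ (norm_nonneg _)]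
          gcongr
          exact hc k l
      _ = c := by
          simp only [← Finset.mul_sum, sB, mul_one]
          rw [← Finset.sum_mul, sA, one_mul]
  have hbdd : BddAbove ((norm ∘ F) '' Complex.HadamardThreeLines.verticalClosedStrip 0 1) := by
    refine ⟨∑ k, ∑ l, (‖inner ℂ (u k) ψ‖ * Real.exp |A k|) * c *
      (‖inner ℂ (v l) ψ‖ * Real.exp |B l|), ?_⟩
    rintro _ ⟨z, hz, rfl⟩
    have hz : 0 ≤ z.re ∧ z.re ≤ 1 := hz
    have key : ∀ a : ℝ, z.re * a ≤ |a| := by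
      intro a
      calc z.re * a ≤ z.re * |a| := by gcongr; exacts [hz.1, le_abs_self a]
        _ ≤ 1 * |a| := by gcongr; exact hz.2
        _ = |a| := one_mul _
    refine (norm_sum_le _ _).trans (Finset.sum_le_sum fun k _ => ?_)
    refine (norm_sum_le _ _).trans (Finset.sum_le_sum fun l _ => ?_)
    simp only [norm_mul, nexp, hnA]
    gcongr
    · exact key _
    · exact hc k l
    · exact key _
  have hle : ∀ x : ℝ, 0 < x → x < 1 → (F x).re ≤ Real.exp (x * Real.log c) := by
    intro x hx0 hx1
    have := Complex.HadamardThreeLines.norm_le_interp_of_mem_verticalClosedStrip₀₁' F (z := x)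
      (a := 1) (b := c) ⟨by simpa using hx0.le, by simpa using hx1.le⟩ hd.diffContOnCl hbdd h0 h1
    rw [Real.one_rpow, one_mul, Complex.ofReal_re, Real.rpow_def_of_pos hc0, mul_comm] at this
    exact (Complex.re_le_norm _).trans this
  have e1 : ∀ k, ∑ l, inner ℂ (u k) (v l) * inner ℂ (v l) ψ = inner ℂ (u k) ψ :=
    fun k => v.sum_inner_mul_inner _ _
  have e2 : ∀ l, ∑ k, inner ℂ ψ (u k) * inner ℂ (u k) (v l) = inner ℂ ψ (v l) :=
    fun k => u.sum_inner_mul_inner _ _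
  have e3 : ∀ w : EuclideanSpace ℂ (Fin d),
      inner ℂ ψ w * inner ℂ w ψ = ((‖inner ℂ w ψ‖ ^ 2 : ℝ) : ℂ) := by
    intro w
    rw [← inner_conj_symm, RCLike.conj_mul]
    norm_cast
  have F0 : F 0 = 1 := by
    simp only [hF, zero_mul, Complex.exp_zero, mul_one, one_mul, mul_assoc, ← Finset.mul_sum, e1, e3]
    exact_mod_cast sA
  have hderiv : HasDerivAt F (((∑ k, ‖inner ℂ (u k) ψ‖ ^ 2 * A k +
      ∑ l, ‖inner ℂ (v l) ψ‖ ^ 2 * B l : ℝ)) : ℂ) 0 := by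
    have : HasDerivAt F (∑ k, ∑ l, (inner ℂ ψ (u k) * inner ℂ (u k) (v l) * inner ℂ (v l) ψ
        * (A k + B l))) 0 := by
      refine HasDerivAt.fun_sum fun k _ => HasDerivAt.fun_sum fun l _ => ?_
      have hA' := (((hasDerivAt_id (0:ℂ)).mul_const (A k : ℂ)).cexp.const_mul
        (inner ℂ ψ (u k))).mul_const (inner ℂ (u k) (v l))
      have hB' := ((hasDerivAt_id (0:ℂ)).mul_const (B l : ℂ)).cexp.const_mul
        (inner ℂ (v l) ψ)
      refine (hA'.mul hB').congr_deriv ?_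
      simp
      ring
    convert this using 1
    simp only [mul_add, Finset.sum_add_distrib, Complex.ofReal_add, Complex.ofReal_sum,
      Complex.ofReal_mul, ← e3]
    congr 1
    · refine Finset.sum_congr rfl fun k _ => ?_
      rw [← e1 k, Finset.mul_sum, Finset.sum_mul]
      exact Finset.sum_congr rfl fun l _ => by ring
    · rw [Finset.sum_comm]
      refine Finset.sum_congr rfl fun l _ => ?_
      rw [← e2 l, Finset.sum_mul, Finset.sum_mul]
  have hr : HasDerivAt (fun x : ℝ => (F x).re) (∑ k, ‖inner ℂ (u k) ψ‖ ^ 2 * A k +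
      ∑ l, ‖inner ℂ (v l) ψ‖ ^ 2 * B l) 0 := by
    have := HasDerivAt.real_of_complex (z := 0) (by simpa only [Complex.ofReal_zero] using hderiv)
    rwa [Complex.ofReal_re] at this
  have hg : HasDerivAt (fun x : ℝ => Real.exp (x * Real.log c)) (Real.log c) 0 := by
    simpa using ((hasDerivAt_id (0:ℝ)).mul_const (Real.log c)).exp
  refine le_of_tendsto_of_tendsto hr.tendsto_slope_zero_right hg.tendsto_slope_zero_right ?_
  filter_upwards [Ioo_mem_nhdsGT (zero_lt_one (α := ℝ))] with x hx
  simp only [zero_add, smul_eq_mul, Complex.ofReal_zero, F0, zero_mul, Real.exp_zero,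
    Complex.one_re]
  have := hle x hx.1 hx.2
  have := inv_nonneg.2 hx.1.le
  gcongr

/-- Maassen–Uffink entropic uncertainty relation for pure states. -/
theorem maassen_uffink_pure
    (d : ℕ) (hd : 1 ≤ d)
    (ψ : EuclideanSpace ℂ (Fin d)) (hψ : ‖ψ‖ = 1)
    (u v : OrthonormalBasis (Fin d) ℂ (EuclideanSpace ℂ (Fin d)))
    (q r : Fin d → ℝ)
    (hq : ∀ k, q k = ‖(inner (𝕜 := ℂ) (u k) ψ)‖ ^ 2)
    (hr : ∀ l, r l = ‖(inner (𝕜 := ℂ) (v l) ψ)‖ ^ 2)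
    (c : ℝ)
    (hc : IsGreatest {x : ℝ | ∃ k l, x = ‖(inner (𝕜 := ℂ) (u k) (v l))‖} c) :
    shannonEntropy2 q + shannonEntropy2 r ≥ -2 * Real.logb 2 c := by
  have hle : ∀ k l, ‖inner ℂ (u k) (v l)‖ ≤ c := fun k l => hc.2 ⟨k, l, rfl⟩
  have hc0 : 0 < c := by
    by_contra hneg
    have hz : ∀ l, ‖inner ℂ (u ⟨0, hd⟩) (v l)‖ = 0 := fun l =>
      le_antisymm ((hle _ l).trans (not_lt.1 hneg)) (norm_nonneg _)
    have := v.sum_sq_norm_inner_left (u ⟨0, hd⟩)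
    simp only [hz, u.norm_eq_one] at this
    norm_num at this
  have main := mu_main u v ψ hψ c hc0 hle
  have h2 : 0 < Real.log 2 := Real.log_pos one_lt_two
  have e : ∀ t : ℝ, Real.negMulLog (t ^ 2) = -2 * (t ^ 2 * Real.log t) := by
    intro t
    rw [Real.negMulLog, Real.log_pow]; push_cast; ring
  simp only [shannonEntropy2, hq, hr, e, ← Finset.sum_div, ← Finset.mul_sum, Real.logb]
  rw [ge_iff_le, ← add_div, ← mul_div_assoc]
  gcongr
  linarith
end

section
/- Werner assisted-cost formula from total entropy and discord: for every real p with 0 ≤ p < 1, define S(p) := −((1+3p)/4)·log₂((1+3p)/4) − 3·((1−p)/4)·log₂((1−p)/4) and D(p) := ((1−p)/4)·log₂(1−p) − ((1+p)/2)·log₂(1+p) + ((1+3p)/4)·log₂(1+3p). Then S(p) + D(p) − 1 = h₂((1−p)/2), where h₂(x) := −x·log₂ x − (1−x)·log₂(1−x) is the binary entropy with the convention 0·log₂ 0 = 0. -/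
/-- The binary entropy function `h₂(x) = −x·log₂ x − (1−x)·log₂(1−x)`,
with the convention `0 · log₂ 0 = 0`. -/
noncomputable def binEntropy2 (x : ℝ) : ℝ :=
  Real.negMulLog x / Real.log 2 + Real.negMulLog (1 - x) / Real.log 2

/-- Werner assisted-cost formula from total entropy and discord:
`S(p) + D(p) − 1 = h₂((1−p)/2)` for `0 ≤ p < 1`, where `S(p)` is the von Neumann
entropy of the Werner state and `D(p)` its discord. -/
theorem werner_assisted_cost_from_entropy_and_discord (p : ℝ) (hp0 : 0 ≤ p) (hp1 : p < 1)
    (S D : ℝ)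
    (hS : S = -((1 + 3 * p) / 4) * Real.logb 2 ((1 + 3 * p) / 4)
        - 3 * ((1 - p) / 4) * Real.logb 2 ((1 - p) / 4))
    (hD : D = ((1 - p) / 4) * Real.logb 2 (1 - p)
        - ((1 + p) / 2) * Real.logb 2 (1 + p)
        + ((1 + 3 * p) / 4) * Real.logb 2 (1 + 3 * p)) :
    S + D - 1 = binEntropy2 ((1 - p) / 2) := by
  have h2 : Real.log 2 ≠ 0 := (Real.log_pos (by norm_num)).ne'
  have h4 : Real.log 4 = 2 * Real.log 2 := by
    rw [show (4 : ℝ) = 2 ^ 2 by norm_num, Real.log_pow]; norm_num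
  have e : 1 - (1 - p) / 2 = (1 + p) / 2 := by ring
  have ha : 1 + 3 * p ≠ 0 := by positivity
  have hb : 1 - p ≠ 0 := (sub_pos.mpr hp1).ne'
  have hc : 1 + p ≠ 0 := by positivity
  subst hS hD
  unfold binEntropy2
  rw [e]
  simp only [Real.negMulLog, Real.logb]
  rw [Real.log_div ha (by norm_num), Real.log_div hb (by norm_num),
    Real.log_div hb (by norm_num), Real.log_div hc (by norm_num), h4]
  field_simp
  ring
end
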